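/- Let i ∈ {1,2} and let n ≥ 56. If the statements T(n, 96; t(n−24), t(n−24), 0) and T(n−24, t(n−24); s_i(n−48), 0, 0) are true, then the statement T(n, t(n); s_i(n−24), 0, 0) is true. -/

import Mathlib

open MvPolynomial

/-- The linear form associated with a coefficient vector `v ∈ ℂ^{n+1}`. -/
noncomputable def lin {n : ℕ} (v : Fin (n + 1) → ℂ) : MvPolynomial (Fin (n + 1)) ℂ :=
  ∑ j, MvPolynomial.C (v j) * MvPolynomial.X j

/-- The subspace `f·U = {f·u : u ∈ U}` of the polynomial ring, where `U` is the
space of linear forms. -/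
noncomputable def mulU {n : ℕ} (f : MvPolynomial (Fin (n + 1)) ℂ) :
    Submodule ℂ (MvPolynomial (Fin (n + 1)) ℂ) :=
  Submodule.span ℂ (Set.range fun j : Fin (n + 1) => f * MvPolynomial.X j)

/-- The affine cone `ℓ^{d-1}·U + ℓ^{d-2}·m·U` over the tangent space to the tangential
variety `T_{n,d}` of the `d`-th Veronese variety at the point `[ℓ^{d-1} m]`. -/
noncomputable def tanCone {n : ℕ} (d : ℕ) (ℓ m : Fin (n + 1) → ℂ) :
    Submodule ℂ (MvPolynomial (Fin (n + 1)) ℂ) :=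
  mulU (lin ℓ ^ (d - 1)) ⊔ mulU (lin ℓ ^ (d - 2) * lin m)

/-- `v ∈ U_{i+1}`, i.e. the coordinates of `v` indexed by `{24i, …, 24i+23}` vanish. -/
def memU {n : ℕ} (i : Fin 3) (v : Fin (n + 1) → ℂ) : Prop :=
  ∀ j : Fin (n + 1), 24 * (i : ℕ) ≤ (j : ℕ) → (j : ℕ) < 24 * (i : ℕ) + 24 → v j = 0

/-- `S_3(U_{i+1})`: the span of all products of three linear forms belonging to `U_{i+1}`. -/
noncomputable def S3U {n : ℕ} (i : Fin 3) : Submodule ℂ (MvPolynomial (Fin (n + 1)) ℂ) :=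
  Submodule.span ℂ
    {p | ∃ a b c : Fin (n + 1) → ℂ,
      memU i a ∧ memU i b ∧ memU i c ∧ p = lin a * lin b * lin c}

/-- `v ∈ U_K`, the span of the variables `x_0, …, x_71`. -/
def memK {n : ℕ} (v : Fin (n + 1) → ℂ) : Prop :=
  ∀ j : Fin (n + 1), 72 ≤ (j : ℕ) → v j = 0

/-- `S_3(U_K)`: the span of all products of three linear forms in `x_0, …, x_71`. -/
noncomputable def S3K (n : ℕ) : Submodule ℂ (MvPolynomial (Fin (n + 1)) ℂ) :=
  Submodule.span ℂ
    {p | ∃ a b c : Fin (n + 1) → ℂ,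
      memK a ∧ memK b ∧ memK c ∧ p = lin a * lin b * lin c}

/-- The alternating sum `Σ_{j=1}^k (−1)^{j−1} C(k,j) · C(n−24j+3, 3)` (with the convention
`C(m,3) = 0` for `m < 3`, realized by truncated subtraction `n+3−24j`). -/
def altsum (n k : ℕ) : ℤ :=
  ∑ j ∈ Finset.Icc 1 k, (-1 : ℤ) ^ (j - 1) * (k.choose j : ℤ) * ((n + 3 - 24 * j).choose 3 : ℤ)

/-- `k = #{i : a_i ≠ 0}`. -/
def kcount (a : Fin 3 → ℕ) : ℕ := (Finset.univ.filter fun i => a i ≠ 0).card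

/-- The expected dimension `w(n, s; a_1, a_2, a_3)`, as an integer. -/
def expdimZ (n s : ℕ) (a : Fin 3 → ℕ) : ℤ :=
  min (altsum n (kcount a) + 48 * ((a 0 + a 1 + a 2 : ℕ) : ℤ) + (2 * n + 1) * s)
    (((n + 3).choose 3 : ℤ))

/-- The subspace `W(n, s; a_1, a_2, a_3)` determined by the given points. -/
noncomputable def Wspace {n s : ℕ} {a : Fin 3 → ℕ}
    (ℓ m : Fin s → Fin (n + 1) → ℂ)
    (ℓ' m' : (i : Fin 3) → Fin (a i) → Fin (n + 1) → ℂ) :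
    Submodule ℂ (MvPolynomial (Fin (n + 1)) ℂ) :=
  (⨆ i : {i : Fin 3 // a i ≠ 0},
      (S3U i.1 ⊔ ⨆ j : Fin (a i.1), tanCone 3 (ℓ' i.1 j) (m' i.1 j)))
    ⊔ ⨆ i : Fin s, tanCone 3 (ℓ i) (m i)

/-- The statement `T(n, s; a_1, a_2, a_3)`: some choice of points realizes the expected
dimension `w(n, s; a_1, a_2, a_3)`. -/
def TStmt (n s : ℕ) (a : Fin 3 → ℕ) : Prop :=
  ∃ (ℓ m : Fin s → Fin (n + 1) → ℂ)
    (ℓ' m' : (i : Fin 3) → Fin (a i) → Fin (n + 1) → ℂ),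
    (∀ (i : Fin 3) (j : Fin (a i)), memU i (ℓ' i j) ∧ memU i (m' i j)) ∧
    (Module.finrank ℂ (Wspace ℓ m ℓ' m') : ℤ) = expdimZ n s a

/-- `s_1(n) = 48k² + (11+4r)k + ⌊(4r²+22r+33)/48⌋` where `n = 24k + r`. -/
def s1 (n : ℕ) : ℕ :=
  48 * (n / 24) ^ 2 + (11 + 4 * (n % 24)) * (n / 24) +
    (4 * (n % 24) ^ 2 + 22 * (n % 24) + 33) / 48

/-- `s_2(n) = s_1(n) + 1`. -/
def s2 (n : ℕ) : ℕ := s1 n + 1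

/-- `t(n) = 4n − 37`. -/
def tfun (n : ℕ) : ℕ := 4 * n - 37

/-- The expected codimension `c(n)` of `W(n, t(n); s_1(n−24), 0, 0)`. -/
def cInt (n : ℕ) : ℤ :=
  ((n + 3).choose 3 : ℤ) - ((n - 21).choose 3 : ℤ) - (tfun n : ℤ) * (2 * n + 1) -
    48 * (s1 (n - 24) : ℤ)

/-!
Specialize `t = t(n − 24)` of the points `[ℓ_i² m_i]`, and all but `t` of the points on `U_1`, to
`U_2`. Let `W` be the resulting space `W(n, 96 + t; t + b, 0, 0)`. Then `W + S_3(U_2)` contains a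
space `W(n, 96; t, t, 0)`, while `W ∩ S_3(U_2)` contains the space `W(n − 24, t; b, 0, 0)` defined
by the specialized points inside the cubics in the variables of `U_2`. Hence
`dim W ≥ w(n, 96; t, t, 0) + w(n − 24, t; b, 0, 0) − C(n − 21, 3)` as soon as both spaces have
their expected dimensions. The same `t` points serve both purposes, because each of the two
dimensions drops at only finitely many points of a line through a given configuration. Since
`W(n, 96; t, t, 0)` is expected to be the whole space of cubics with no excess conditions, the lower
bound equals the expected dimension `w(n, 96 + t; t + b, 0, 0)`, which is always an upper bound:
a tangent cone has dimension at most `2n + 1`, and at most `48` modulo `S_3(U_1)` if its point lies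
on `U_1`. The numbers `t(n)` and `s_i(n)` satisfy `t(n) = 96 + t(n − 24)` and
`s_i(n) = t(n) + s_i(n − 24)`.
-/

section PolynomialFamily

section Basic

variable {R A : Type*} [CommSemiring R] [CommSemiring A] [Algebra R A]

/-- A family of subspaces of a commutative algebra depending polynomially on a parameter `z`:
each `F z` is spanned by the values at `z` of a fixed set of polynomials with coefficients in the
algebra. -/
def IsPolynomialFamily (F : R → Submodule R A) : Prop :=
  ∃ S : Set (Polynomial A),
    ∀ z, F z = Submodule.span R ((fun p => p.eval (algebraMap R A z)) '' S)

namespace IsPolynomialFamily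

theorem const (P : Submodule R A) : IsPolynomialFamily fun _ : R => P :=
  ⟨Polynomial.C '' P, fun z => by simp [Set.image_image]⟩

theorem sup {F G : R → Submodule R A} (hF : IsPolynomialFamily F) (hG : IsPolynomialFamily G) :
    IsPolynomialFamily fun z => F z ⊔ G z := by
  obtain ⟨S, hS⟩ := hF
  obtain ⟨T, hT⟩ := hG
  exact ⟨S ∪ T, fun z => by simp only [Set.image_union, Submodule.span_union, hS, hT]⟩

theorem iSup {ι : Sort*} {F : ι → R → Submodule R A} (hF : ∀ i, IsPolynomialFamily (F i)) :
    IsPolynomialFamily fun z => ⨆ i, F i z := by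
  choose S hS using hF
  exact ⟨⋃ i, S i, fun z => by simp only [Set.image_iUnion, Submodule.span_iUnion, hS]⟩

end IsPolynomialFamily

theorem exists_eval_eq_linearMap_eval (L : A →ₗ[R] R) (p : Polynomial A) :
    ∃ q : Polynomial R, ∀ z, q.eval z = L (p.eval (algebraMap R A z)) := by
  refine ⟨∑ i ∈ p.support, Polynomial.monomial i (L (p.coeff i)), fun z => ?_⟩
  rw [Polynomial.eval_finsetSum, Polynomial.eval_eq_sum, Polynomial.sum, map_sum]
  refine Finset.sum_congr rfl fun i _ => ?_
  rw [Polynomial.eval_monomial, ← map_pow, mul_comm (p.coeff i), ← Algebra.smul_def, map_smul,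
    smul_eq_mul, mul_comm]

end Basic

theorem exists_linearMap_eq_single {K V ι : Type*} [DivisionRing K] [AddCommGroup V]
    [Module K V] [Finite ι] [DecidableEq ι] {v : ι → V} (hv : LinearIndependent K v) :
    ∃ L : V →ₗ[K] ι → K, ∀ i, L (v i) = Pi.single i 1 := by
  have := Fintype.ofFinite ι
  obtain ⟨L, hL⟩ := (Fintype.linearCombination K v).exists_leftInverse_of_injective
    (LinearMap.ker_eq_bot.2 (linearIndependent_iff_injective_fintypeLinearCombination.1 hv))
  exact ⟨L, fun i => by simpa using LinearMap.congr_fun hL (Pi.single i 1)⟩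

section Field

variable {K A : Type*} [Field K] [CommRing A] [Algebra K A]

/-- A determinant that is nonzero at `z₀` is a nonzero polynomial in the parameter, hence has only
finitely many roots. -/
theorem finite_setOf_not_linearIndependent_eval {ι : Type*} [Finite ι] (p : ι → Polynomial A)
    {z₀ : K} (h : LinearIndependent K fun i => (p i).eval (algebraMap K A z₀)) :
    {z | ¬ LinearIndependent K fun i => (p i).eval (algebraMap K A z)}.Finite := by
  classical
  have := Fintype.ofFinite ι
  obtain ⟨L, hL⟩ := exists_linearMap_eq_single h
  choose q hq using fun i j => exists_eval_eq_linearMap_eval (LinearMap.proj j ∘ₗ L) (p i)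
  have eval_det (z : K) : (Matrix.of q).det.eval z =
      (Matrix.of fun i j => L ((p i).eval (algebraMap K A z)) j).det := by
    rw [← Polynomial.coe_evalRingHom, RingHom.map_det]
    congr 1
    ext i j
    simp [hq]
  have det_ne_zero : (Matrix.of q).det ≠ 0 := by
    intro h0
    have h1 := eval_det z₀
    have hone : (Matrix.of fun i j => L ((p i).eval (algebraMap K A z₀)) j) = 1 := by
      ext i j
      rw [Matrix.of_apply, hL, Matrix.one_apply, Pi.single_apply]
      simp only [eq_comm]
    simp [h0, hone] at h1
  refine (Polynomial.finite_setOfPred_isRoot det_ne_zero).subset fun z hz => ?_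
  by_contra hroot
  refine hz (LinearIndependent.of_comp L ?_)
  refine Matrix.linearIndependent_rows_of_det_ne_zero
    (A := Matrix.of fun i j => L ((p i).eval (algebraMap K A z)) j) ?_
  rwa [← eval_det]

namespace IsPolynomialFamily

theorem finite_setOf_finrank_lt {F : K → Submodule K A} (hF : IsPolynomialFamily F)
    [∀ z, FiniteDimensional K (F z)] (z₀ : K) :
    {z | Module.finrank K (F z) < Module.finrank K (F z₀)}.Finite := by
  obtain ⟨S, hS⟩ := hF
  have : FiniteDimensional K
      (Submodule.span K ((fun p => p.eval (algebraMap K A z₀)) '' S)) := hS z₀ ▸ inferInstance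
  obtain ⟨f, hfS, -, hf⟩ := Submodule.exists_fun_fin_finrank_span_eq K
    ((fun p => p.eval (algebraMap K A z₀)) '' S)
  choose p hpS hp using hfS
  refine (finite_setOf_not_linearIndependent_eval p (z₀ := z₀)
    (by simpa only [hp] using hf)).subset fun z hz hli => ?_
  rw [Set.mem_ofPred_eq, hS z₀] at hz
  refine not_le.2 hz ?_
  have hmem (i) : (p i).eval (algebraMap K A z) ∈ F z :=
    hS z ▸ Submodule.subset_span ⟨p i, hpS i, rfl⟩
  simpa using (LinearIndependent.of_comp (v := fun i => (⟨_, hmem i⟩ : F z))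
    (F z).subtype hli).fintype_card_le_finrank

theorem exists_finrank_le_and_finrank_le [Infinite K] {B : Type*} [CommRing B] [Algebra K B]
    {F : K → Submodule K A} {G : K → Submodule K B}
    (hF : IsPolynomialFamily F) (hG : IsPolynomialFamily G)
    [∀ z, FiniteDimensional K (F z)] [∀ z, FiniteDimensional K (G z)] (z₀ z₁ : K) :
    ∃ z, Module.finrank K (F z₀) ≤ Module.finrank K (F z) ∧
      Module.finrank K (G z₁) ≤ Module.finrank K (G z) := by
  obtain ⟨z, hz⟩ := ((hF.finite_setOf_finrank_lt z₀).union
    (hG.finite_setOf_finrank_lt z₁)).infinite_compl.nonempty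
  exact ⟨z, not_lt.1 fun h => hz (.inl h), not_lt.1 fun h => hz (.inr h)⟩

end IsPolynomialFamily

end Field

end PolynomialFamily

section SpanPower

variable {R A : Type*} [CommSemiring R] [CommSemiring A] [Algebra R A]

open Submodule in
theorem span_range_pow_eq_span_range_sym {ι : Type*} (v : ι → A) (d : ℕ) :
    span R (Set.range v) ^ d =
      span R (Set.range fun s : Sym ι d => ((s : Multiset ι).map v).prod) := by
  rw [span_pow]
  congr 1
  ext x
  rw [Set.mem_pow]
  constructor
  · rintro ⟨f, rfl⟩
    choose g hg using fun i => (f i).2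
    refine ⟨⟨Multiset.ofList (List.ofFn g), by simp⟩, ?_⟩
    simp [List.map_ofFn, Function.comp_def, hg]
  · rintro ⟨⟨s, hs⟩, rfl⟩
    induction s using Quotient.inductionOn with
    | h l =>
      simp only [Multiset.quot_mk_to_coe, Multiset.coe_card] at hs
      subst hs
      refine ⟨fun i => ⟨v (l.get i), l.get i, rfl⟩, ?_⟩
      change (List.ofFn (v ∘ l.get)).prod = (l.map v).prod
      rw [← List.map_ofFn, List.ofFn_get]

theorem finrank_span_range_pow_le [StrongRankCondition R] {ι : Type*} [Fintype ι] (v : ι → A)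
    (d : ℕ) :
    Module.finrank R ↥(Submodule.span R (Set.range v) ^ d) ≤
      (Fintype.card ι + d - 1).choose d := by
  classical
  rw [span_range_pow_eq_span_range_sym, ← Sym.card_sym_eq_choose]
  exact finrank_range_le_card _

end SpanPower

section LinearForms

variable (R : Type*) {σ τ : Type*} [CommSemiring R]

/-- The linear forms in the variables indexed by `T`, so that the `d`-th power
`linearForms R T ^ d` is the space of degree-`d` forms in these variables. -/
noncomputable def linearForms (T : Set σ) : Submodule R (MvPolynomial σ R) :=
  Submodule.span R (X '' T)

variable {R}

theorem X_mem_linearForms {T : Set σ} {i : σ} (hi : i ∈ T) :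
    (X i : MvPolynomial σ R) ∈ linearForms R T :=
  Submodule.subset_span ⟨i, hi, rfl⟩

theorem linearForms_mono {S T : Set σ} (h : S ⊆ T) : linearForms R S ≤ linearForms R T :=
  Submodule.span_mono (Set.image_mono h)

theorem linearForms_union (S T : Set σ) :
    linearForms R (S ∪ T) = linearForms R S ⊔ linearForms R T := by
  rw [linearForms, Set.image_union, Submodule.span_union]
  rfl

theorem map_rename_linearForms_pow (f : σ → τ) (T : Set σ) (d : ℕ) :
    (linearForms R T ^ d).map (rename f : MvPolynomial σ R →ₐ[R] MvPolynomial τ R).toLinearMap =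
      linearForms R (f '' T) ^ d := by
  rw [Submodule.map_pow, linearForms, Submodule.map_span, linearForms, Set.image_image,
    Set.image_image]
  simp

theorem finrank_linearForms_pow_le [StrongRankCondition R] (T : Set σ) [Finite T] (d : ℕ) :
    Module.finrank R ↥(linearForms R T ^ d) ≤ (T.ncard + d - 1).choose d := by
  have := Fintype.ofFinite T
  rw [linearForms, Set.image_eq_range, ← Nat.card_coe_set_eq, Nat.card_eq_fintype_card]
  exact finrank_span_range_pow_le _ d

theorem finrank_linearForms_le [StrongRankCondition R] (T : Set σ) [Finite T] :
    Module.finrank R (linearForms R T) ≤ T.ncard := by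
  have h := finrank_linearForms_pow_le (R := R) T 1
  rw [pow_one] at h
  simpa using h

instance finite_linearForms (T : Set σ) [Finite T] : Module.Finite R (linearForms R T) :=
  Module.Finite.span_of_finite R (T.toFinite.image _)

instance finite_linearForms_pow (T : Set σ) [Finite T] (d : ℕ) :
    Module.Finite R ↥(linearForms R T ^ d) :=
  Module.Finite.iff_fg.2 ((Module.Finite.iff_fg.1 inferInstance).pow d)

end LinearForms

section Lin

variable {n : ℕ}

theorem lin_eq_linearCombination (v : Fin (n + 1) → ℂ) :
    lin v = Fintype.linearCombination ℂ X v := by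
  simp only [lin, Fintype.linearCombination_apply, smul_eq_C_mul]

theorem lin_single (j : Fin (n + 1)) : lin (Pi.single j 1) = X j := by
  rw [lin_eq_linearCombination, Fintype.linearCombination_apply_single, one_smul]

theorem lin_mem_linearForms {T : Set (Fin (n + 1))} {v : Fin (n + 1) → ℂ}
    (hv : ∀ j ∉ T, v j = 0) : lin v ∈ linearForms ℂ T := by
  refine Submodule.sum_mem _ fun j _ => ?_
  by_cases hj : j ∈ T
  · rw [← smul_eq_C_mul]
    exact Submodule.smul_mem _ _ (X_mem_linearForms hj)
  · simp [hv j hj]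

theorem lin_mem_linearForms_univ (v : Fin (n + 1) → ℂ) : lin v ∈ linearForms ℂ Set.univ :=
  lin_mem_linearForms fun j hj => (hj (Set.mem_univ j)).elim

theorem lin_lineMap (v w : Fin (n + 1) → ℂ) (z : ℂ) :
    lin (AffineMap.lineMap v w z) =
      (Polynomial.X * Polynomial.C (lin w - lin v) + Polynomial.C (lin v)).eval
        (algebraMap ℂ _ z) := by
  rw [Polynomial.eval_add, Polynomial.eval_mul, Polynomial.eval_X, Polynomial.eval_C,
    Polynomial.eval_C, ← Algebra.smul_def, AffineMap.lineMap_apply, vsub_eq_sub, vadd_eq_add]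
  simp only [lin_eq_linearCombination, map_add, map_smul, map_sub]

theorem rename_lin {k : ℕ} {f : Fin (k + 1) → Fin (n + 1)} (hf : Function.Injective f)
    (v : Fin (k + 1) → ℂ) : rename f (lin v) = lin (Function.ExtendByZero.linearMap ℂ f v) := by
  simp only [lin, map_sum, map_mul, rename_C, rename_X]
  refine Fintype.sum_of_injective f hf _ _ (fun j hj => ?_) fun j => ?_
  · rw [Function.ExtendByZero.linearMap_apply, Function.extend_apply' _ _ _ hj]
    simp
  · rw [Function.ExtendByZero.linearMap_apply, hf.extend_apply]

end Lin

section Block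

variable {k n : ℕ} {i : Fin 3}

/-- The `i`-th block of 24 consecutive variables. In the notation of the statement, `U_{i+1}` is
the space of linear forms in the variables outside of it. -/
def block (i : Fin 3) : Set (Fin (n + 1)) :=
  {j | 24 * (i : ℕ) ≤ j ∧ (j : ℕ) < 24 * i + 24}

theorem ncard_block_le : (block i : Set (Fin (n + 1))).ncard ≤ 24 := by
  calc (block i : Set (Fin (n + 1))).ncard
      ≤ (Set.Ico (24 * (i : ℕ)) (24 * i + 24)).ncard :=
        Set.ncard_le_ncard_of_injOn Fin.val (fun _ hj => hj) Fin.val_injective.injOn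
    _ = 24 := by simp [← Finset.coe_Ico]

theorem memU_iff {v : Fin (n + 1) → ℂ} : memU i v ↔ ∀ j ∈ block i, v j = 0 :=
  forall_congr' fun _ => and_imp.symm

theorem memU.lin_mem {v : Fin (n + 1) → ℂ} (hv : memU i v) : lin v ∈ linearForms ℂ (block i)ᶜ :=
  lin_mem_linearForms fun j hj => memU_iff.1 hv j (not_not.1 hj)

theorem span_lin_image_memU :
    Submodule.span ℂ (lin '' {v : Fin (n + 1) → ℂ | memU i v}) = linearForms ℂ (block i)ᶜ := by
  refine le_antisymm (Submodule.span_le.2 ?_) (Submodule.span_mono ?_)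
  · rintro _ ⟨v, hv, rfl⟩
    exact memU.lin_mem hv
  · rintro _ ⟨j, hj, rfl⟩
    refine ⟨Pi.single j 1, memU_iff.2 fun j' hj' => Pi.single_eq_of_ne ?_ _, lin_single j⟩
    rintro rfl
    exact hj hj'

open scoped Pointwise in
theorem S3U_eq_linearForms_pow :
    (S3U i : Submodule ℂ (MvPolynomial (Fin (n + 1)) ℂ)) = linearForms ℂ (block i)ᶜ ^ 3 := by
  rw [← span_lin_image_memU, Submodule.span_pow, S3U]
  congr 1
  ext p
  rw [pow_succ, pow_two]
  simp only [Set.mem_mul, Set.exists_mem_image, Set.mem_ofPred_eq]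
  grind

instance : FiniteDimensional ℂ (S3U i : Submodule ℂ (MvPolynomial (Fin (n + 1)) ℂ)) :=
  S3U_eq_linearForms_pow (i := i) (n := n) ▸ finite_linearForms_pow _ 3

theorem S3U_le : (S3U i : Submodule ℂ (MvPolynomial (Fin (n + 1)) ℂ)) ≤
    linearForms ℂ Set.univ ^ 3 := by
  rw [S3U_eq_linearForms_pow]
  exact pow_le_pow_left' (linearForms_mono (Set.subset_univ _)) 3

/-- The inclusion of `k + 1` variables into `k + 25` variables whose image avoids the `i`-th
block. -/
def skipBlock (i : Fin 3) (j : Fin (k + 1)) : Fin (k + 24 + 1) :=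
  ⟨if (j : ℕ) < 24 * i then j else j + 24, by split_ifs <;> omega⟩

theorem skipBlock_injective : Function.Injective (skipBlock i : Fin (k + 1) → _) := by
  intro j j' h
  simp only [skipBlock, Fin.mk.injEq] at h
  ext
  split_ifs at h <;> omega

theorem skipBlock_notMem_block (j : Fin (k + 1)) : skipBlock i j ∉ block i := by
  simp only [skipBlock, block, Set.mem_ofPred_eq]
  split_ifs <;> omega

theorem range_skipBlock (h : 24 * (i : ℕ) ≤ k + 1) :
    Set.range (skipBlock i : Fin (k + 1) → _) = (block i)ᶜ := by
  refine Set.Subset.antisymm (Set.range_subset_iff.2 skipBlock_notMem_block) fun j hj => ?_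
  have hj : ¬ (24 * (i : ℕ) ≤ j ∧ (j : ℕ) < 24 * i + 24) := hj
  by_cases hlt : (j : ℕ) < 24 * i
  · exact ⟨⟨j, by omega⟩, Fin.ext (by simp [skipBlock, hlt])⟩
  · refine ⟨⟨j - 24, by omega⟩, Fin.ext ?_⟩
    simp only [skipBlock]
    split_ifs <;> omega

theorem skipBlock_mem_block_iff {i' : Fin 3} (h : i' < i) {j : Fin (k + 1)} :
    skipBlock i j ∈ block i' ↔ j ∈ block i' := by
  simp only [skipBlock, block, Set.mem_ofPred_eq]
  split_ifs <;> omega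

theorem S3U_eq_map_rename (h : 24 * (i : ℕ) ≤ k + 1) :
    (S3U i : Submodule ℂ (MvPolynomial (Fin (k + 24 + 1)) ℂ)) =
      (linearForms ℂ (Set.univ : Set (Fin (k + 1))) ^ 3).map
        (rename (skipBlock i) : MvPolynomial _ ℂ →ₐ[ℂ] _).toLinearMap := by
  rw [map_rename_linearForms_pow, Set.image_univ, range_skipBlock h, S3U_eq_linearForms_pow]

theorem finrank_S3U_le (h : 24 * (i : ℕ) ≤ k + 1) :
    Module.finrank ℂ (S3U i : Submodule ℂ (MvPolynomial (Fin (k + 24 + 1)) ℂ)) ≤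
      (k + 3).choose 3 := by
  rw [S3U_eq_map_rename h]
  refine (Submodule.finrank_map_le _ _).trans ((finrank_linearForms_pow_le _ 3).trans_eq ?_)
  simp [Set.ncard_univ]

theorem map_rename_skipBlock_S3U_le {i' : Fin 3} (h : i' < i) :
    (S3U i' : Submodule ℂ (MvPolynomial (Fin (k + 1)) ℂ)).map
      (rename (skipBlock i) : MvPolynomial _ ℂ →ₐ[ℂ] _).toLinearMap ≤ S3U i' := by
  rw [S3U_eq_linearForms_pow, S3U_eq_linearForms_pow, map_rename_linearForms_pow]
  refine pow_le_pow_left' (linearForms_mono ?_) 3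
  rintro _ ⟨j, hj, rfl⟩
  exact fun hmem => hj ((skipBlock_mem_block_iff h).1 hmem)

/-- The coefficient vector of the linear form in `k + 25` variables obtained from the linear form
with coefficient vector `v` by renaming its variables along `skipBlock i`. -/
noncomputable abbrev extendBlock (i : Fin 3) : (Fin (k + 1) → ℂ) →ₗ[ℂ] (Fin (k + 24 + 1) → ℂ) :=
  Function.ExtendByZero.linearMap ℂ (skipBlock i)

theorem extendBlock_apply_skipBlock (v : Fin (k + 1) → ℂ) (j : Fin (k + 1)) :
    extendBlock i v (skipBlock i j) = v j :=
  skipBlock_injective.extend_apply _ _ _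

theorem memU_extendBlock (v : Fin (k + 1) → ℂ) : memU i (extendBlock i v) := by
  refine memU_iff.2 fun j hj => Function.extend_apply' _ _ _ ?_
  rintro ⟨j', rfl⟩
  exact skipBlock_notMem_block j' hj

theorem memU.extendBlock_of_lt {i' : Fin 3} (h : i' < i) {v : Fin (k + 1) → ℂ} (hv : memU i' v) :
    memU i' (extendBlock i v) := by
  refine memU_iff.2 fun j hj => ?_
  by_cases hrange : ∃ j', skipBlock i j' = j
  · obtain ⟨j', rfl⟩ := hrange
    rw [extendBlock_apply_skipBlock]
    exact memU_iff.1 hv j' ((skipBlock_mem_block_iff h).1 hj)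
  · exact Function.extend_apply' _ _ _ hrange

theorem exists_eq_extendBlock_comp {ι : Type*} (h : 24 * (i : ℕ) ≤ k + 1)
    {w : ι → Fin (k + 24 + 1) → ℂ} (hw : ∀ a, memU i (w a)) :
    ∃ v : ι → Fin (k + 1) → ℂ, w = extendBlock i ∘ v := by
  refine ⟨fun a => w a ∘ skipBlock i, funext fun a => funext fun j => ?_⟩
  by_cases hj : j ∈ block i
  · rw [memU_iff.1 (hw a) j hj, Function.comp_apply, memU_iff.1 (memU_extendBlock _) j hj]
  · rw [← Set.mem_compl_iff, ← range_skipBlock h] at hj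
    obtain ⟨j', rfl⟩ := hj
    rw [Function.comp_apply, extendBlock_apply_skipBlock, Function.comp_apply]

theorem extendBlock_comp_lineMap {ι : Type*} (v w : ι → Fin (k + 1) → ℂ) (z : ℂ) :
    extendBlock i ∘ AffineMap.lineMap v w z =
      AffineMap.lineMap (extendBlock i ∘ v) (extendBlock i ∘ w) z := by
  ext1 a
  simp [AffineMap.pi_lineMap_apply, AffineMap.lineMap_apply]

end Block

section MulLeft

section Semiring

variable {R A B : Type*} [CommSemiring R] [CommSemiring A] [Algebra R A]

theorem map_mulLeft_le_mul {P Q : Submodule R A} {a : A} (ha : a ∈ Q) :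
    P.map (LinearMap.mulLeft R a) ≤ Q * P :=
  Submodule.map_le_iff_le_comap.2 fun _ hx => Submodule.mul_mem_mul ha hx

theorem map_map_mulLeft [CommSemiring B] [Algebra R B] (φ : A →ₐ[R] B) (P : Submodule R A) (a : A) :
    (P.map (LinearMap.mulLeft R a)).map φ.toLinearMap =
      (P.map φ.toLinearMap).map (LinearMap.mulLeft R (φ a)) := by
  rw [← Submodule.map_comp, ← Submodule.map_comp]
  congr 1
  ext
  simp

theorem IsPolynomialFamily.map_mulLeft (P : Submodule R A) (p : Polynomial A) :
    IsPolynomialFamily fun z : R =>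
      P.map (LinearMap.mulLeft R (p.eval (algebraMap R A z))) := by
  refine ⟨(fun a => p * Polynomial.C a) '' P, fun z => ?_⟩
  have map_eq := Submodule.map_span (LinearMap.mulLeft R (p.eval (algebraMap R A z))) (P : Set A)
  rw [Submodule.span_eq] at map_eq
  simp only [Set.image_image, Polynomial.eval_mul, Polynomial.eval_C]
  exact map_eq

end Semiring

section Field

variable {K A : Type*} [Field K] [CommRing A] [Algebra K A]

theorem finrank_map_mulLeft_sup_le (P : Submodule K A) [FiniteDimensional K P] (a b : A) :
    Module.finrank K ↥(P.map (LinearMap.mulLeft K a) ⊔ P.map (LinearMap.mulLeft K b)) ≤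
      2 * Module.finrank K P := by
  have ha := Submodule.finrank_map_le (LinearMap.mulLeft K a) P
  have hb := Submodule.finrank_map_le (LinearMap.mulLeft K b) P
  have := Submodule.finrank_add_le_finrank_add_finrank
    (P.map (LinearMap.mulLeft K a)) (P.map (LinearMap.mulLeft K b))
  omega

/-- The two translates share the vector `x * a * b`, unless one of them vanishes. -/
theorem finrank_map_mulLeft_sup_lt [IsDomain A] {P : Submodule K A} [FiniteDimensional K P]
    {a b x : A} (ha : a ∈ P) (hb : b ∈ P) (hP : P ≠ ⊥) :
    Module.finrank K
        ↥(P.map (LinearMap.mulLeft K (x * a)) ⊔ P.map (LinearMap.mulLeft K (x * b))) <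
      2 * Module.finrank K P := by
  have hxa := Submodule.finrank_map_le (LinearMap.mulLeft K (x * a)) P
  have hxb := Submodule.finrank_map_le (LinearMap.mulLeft K (x * b)) P
  have hpos : 1 ≤ Module.finrank K P := Submodule.one_le_finrank_iff.2 hP
  by_cases h : x * a * b = 0
  · rcases mul_eq_zero.1 h with h | h
    · rw [h, LinearMap.mulLeft_zero_eq_zero, Submodule.map_zero, bot_sup_eq]
      omega
    · rw [h, mul_zero, LinearMap.mulLeft_zero_eq_zero, Submodule.map_zero, sup_bot_eq]
      omega
  have hinf : P.map (LinearMap.mulLeft K (x * a)) ⊓ P.map (LinearMap.mulLeft K (x * b)) ≠ ⊥ :=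
    (Submodule.ne_bot_iff _).2 ⟨_, ⟨⟨b, hb, rfl⟩, ⟨a, ha, mul_right_comm x b a⟩⟩, h⟩
  have hinf_pos := Submodule.one_le_finrank_iff.2 hinf
  have := Submodule.finrank_sup_add_finrank_inf_eq
    (P.map (LinearMap.mulLeft K (x * a))) (P.map (LinearMap.mulLeft K (x * b)))
  omega

end Field

end MulLeft

theorem finrank_iSup_le_sum {K V ι : Type*} [DivisionRing K] [AddCommGroup V] [Module K V]
    [Fintype ι] (P : ι → Submodule K V) [∀ i, FiniteDimensional K (P i)] :
    Module.finrank K ↥(⨆ i, P i) ≤ ∑ i, Module.finrank K (P i) := by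
  classical
  rw [← Finset.sup_univ_eq_iSup]
  induction (Finset.univ : Finset ι) using Finset.induction_on with
  | empty => simp
  | insert i s hi ih =>
    rw [Finset.sup_insert, Finset.sum_insert hi]
    have : FiniteDimensional K ↥(s.sup P) := Submodule.finiteDimensional_finset_sup s P
    exact (Submodule.finrank_add_le_finrank_add_finrank _ _).trans (by omega)

section TanCone

variable {k n d : ℕ}

/-- The part `ℓ ^ (d - 1) · L + ℓ ^ (d - 2) · m · L` of a tangent cone, where `L` is the space of
linear forms in the variables indexed by `T` only. -/
noncomputable def tanConeAlong (T : Set (Fin (n + 1))) (d : ℕ) (ℓ m : Fin (n + 1) → ℂ) :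
    Submodule ℂ (MvPolynomial (Fin (n + 1)) ℂ) :=
  (linearForms ℂ T).map (LinearMap.mulLeft ℂ (lin ℓ ^ (d - 1))) ⊔
    (linearForms ℂ T).map (LinearMap.mulLeft ℂ (lin ℓ ^ (d - 2) * lin m))

theorem mulU_eq_map_mulLeft (f : MvPolynomial (Fin (n + 1)) ℂ) :
    mulU f = (linearForms ℂ Set.univ).map (LinearMap.mulLeft ℂ f) := by
  rw [linearForms, Submodule.map_span, Set.image_univ, ← Set.range_comp]
  rfl

theorem tanCone_eq_tanConeAlong_univ (ℓ m : Fin (n + 1) → ℂ) :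
    tanCone d ℓ m = tanConeAlong Set.univ d ℓ m := by
  simp only [tanCone, tanConeAlong, mulU_eq_map_mulLeft]

instance (T : Set (Fin (n + 1))) (ℓ m : Fin (n + 1) → ℂ) :
    FiniteDimensional ℂ (tanConeAlong T d ℓ m) := by
  unfold tanConeAlong
  infer_instance

instance (ℓ m : Fin (n + 1) → ℂ) : FiniteDimensional ℂ (tanCone d ℓ m) := by
  rw [tanCone_eq_tanConeAlong_univ]
  infer_instance

theorem tanConeAlong_mono {S T : Set (Fin (n + 1))} (h : S ⊆ T) (ℓ m : Fin (n + 1) → ℂ) :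
    tanConeAlong S d ℓ m ≤ tanConeAlong T d ℓ m :=
  sup_le_sup (Submodule.map_mono (linearForms_mono h)) (Submodule.map_mono (linearForms_mono h))

theorem tanConeAlong_union (S T : Set (Fin (n + 1))) (ℓ m : Fin (n + 1) → ℂ) :
    tanConeAlong (S ∪ T) d ℓ m = tanConeAlong S d ℓ m ⊔ tanConeAlong T d ℓ m := by
  simp only [tanConeAlong, linearForms_union, Submodule.map_sup]
  exact sup_sup_sup_comm _ _ _ _

theorem tanConeAlong_le_linearForms_pow (hd : 2 ≤ d) {T : Set (Fin (n + 1))}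
    {ℓ m : Fin (n + 1) → ℂ} (hℓ : lin ℓ ∈ linearForms ℂ T) (hm : lin m ∈ linearForms ℂ T) :
    tanConeAlong T d ℓ m ≤ linearForms ℂ T ^ d := by
  obtain ⟨d, rfl⟩ := Nat.exists_eq_add_of_le' hd
  rw [pow_succ]
  refine sup_le (map_mulLeft_le_mul (Submodule.pow_mem_pow _ hℓ _)) (map_mulLeft_le_mul ?_)
  rw [pow_succ]
  exact Submodule.mul_mem_mul (Submodule.pow_mem_pow _ hℓ _) hm

theorem finrank_tanConeAlong_le (T : Set (Fin (n + 1))) (ℓ m : Fin (n + 1) → ℂ) :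
    Module.finrank ℂ (tanConeAlong T d ℓ m) ≤ 2 * T.ncard :=
  (finrank_map_mulLeft_sup_le _ _ _).trans (Nat.mul_le_mul_left 2 (finrank_linearForms_le T))

theorem finrank_tanCone_le (hd : 2 ≤ d) (ℓ m : Fin (n + 1) → ℂ) :
    Module.finrank ℂ (tanCone d ℓ m) ≤ 2 * n + 1 := by
  obtain ⟨d, rfl⟩ := Nat.exists_eq_add_of_le' hd
  have hU := finrank_linearForms_le (R := ℂ) (Set.univ : Set (Fin (n + 1)))
  rw [Set.ncard_univ, Nat.card_fin] at hU
  have hne : linearForms ℂ (Set.univ : Set (Fin (n + 1))) ≠ ⊥ :=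
    (Submodule.ne_bot_iff _).2 ⟨X 0, X_mem_linearForms (Set.mem_univ _), X_ne_zero 0⟩
  have := finrank_map_mulLeft_sup_lt (x := lin ℓ ^ d) (lin_mem_linearForms_univ ℓ)
    (lin_mem_linearForms_univ m) hne
  rw [tanCone_eq_tanConeAlong_univ, tanConeAlong, Nat.add_sub_cancel, Nat.add_succ_sub_one,
    pow_succ]
  omega

theorem map_rename_tanCone_le {f : Fin (k + 1) → Fin (n + 1)} (hf : Function.Injective f)
    (u v : Fin (k + 1) → ℂ) :
    (tanCone d u v).map (rename f : MvPolynomial _ ℂ →ₐ[ℂ] _).toLinearMap ≤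
      tanCone d (Function.ExtendByZero.linearMap ℂ f u)
        (Function.ExtendByZero.linearMap ℂ f v) := by
  have map_linearForms := map_rename_linearForms_pow (R := ℂ) f Set.univ 1
  rw [pow_one, pow_one] at map_linearForms
  rw [tanCone_eq_tanConeAlong_univ, tanCone_eq_tanConeAlong_univ]
  refine le_trans (le_of_eq ?_) (tanConeAlong_mono (Set.subset_univ (f '' Set.univ)) _ _)
  simp only [tanConeAlong, Submodule.map_sup, map_map_mulLeft, map_linearForms, map_mul, map_pow,
    rename_lin hf]

theorem tanCone_le_S3U_sup {i : Fin 3} {ℓ m : Fin (n + 1) → ℂ} (hℓ : memU i ℓ) (hm : memU i m) :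
    tanCone 3 ℓ m ≤ S3U i ⊔ tanConeAlong (block i) 3 ℓ m := by
  rw [tanCone_eq_tanConeAlong_univ, ← Set.compl_union_self (block i), tanConeAlong_union,
    S3U_eq_linearForms_pow]
  exact sup_le_sup_right
    (tanConeAlong_le_linearForms_pow (by norm_num) hℓ.lin_mem hm.lin_mem) _

theorem isPolynomialFamily_tanCone_lineMap (u₀ u₁ v₀ v₁ : Fin (n + 1) → ℂ) :
    IsPolynomialFamily fun z : ℂ =>
      tanCone d (AffineMap.lineMap u₀ u₁ z) (AffineMap.lineMap v₀ v₁ z) := by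
  simp only [tanCone_eq_tanConeAlong_univ, tanConeAlong, lin_lineMap, ← Polynomial.eval_pow,
    ← Polynomial.eval_mul]
  exact (IsPolynomialFamily.map_mulLeft _ _).sup (IsPolynomialFamily.map_mulLeft _ _)

end TanCone

section TanSpan

variable {k n : ℕ} {ι : Type*}

/-- The space spanned by the tangent cones to the cubic tangential variety at the points
`[ℓ_i² m_i]`. -/
noncomputable def tanSpan (ℓ m : ι → Fin (n + 1) → ℂ) :
    Submodule ℂ (MvPolynomial (Fin (n + 1)) ℂ) :=
  ⨆ i, tanCone 3 (ℓ i) (m i)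

theorem tanSpan_append {s t : ℕ} (ℓ m : Fin s → Fin (n + 1) → ℂ) (p q : Fin t → Fin (n + 1) → ℂ) :
    tanSpan (Fin.append ℓ p) (Fin.append m q) = tanSpan ℓ m ⊔ tanSpan p q := by
  simp only [tanSpan, ← finSumFinEquiv.iSup_comp, iSup_sum, finSumFinEquiv_apply_left,
    finSumFinEquiv_apply_right, Fin.append_left, Fin.append_right]

theorem tanSpan_le (ℓ m : ι → Fin (n + 1) → ℂ) : tanSpan ℓ m ≤ linearForms ℂ Set.univ ^ 3 :=
  iSup_le fun i => tanCone_eq_tanConeAlong_univ (ℓ i) (m i) ▸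
    tanConeAlong_le_linearForms_pow (by norm_num) (lin_mem_linearForms_univ _)
      (lin_mem_linearForms_univ _)

instance [Finite ι] (ℓ m : ι → Fin (n + 1) → ℂ) : FiniteDimensional ℂ (tanSpan ℓ m) :=
  Submodule.finiteDimensional_iSup _

theorem finrank_tanSpan_le [Fintype ι] (ℓ m : ι → Fin (n + 1) → ℂ) :
    Module.finrank ℂ (tanSpan ℓ m) ≤ (2 * n + 1) * Fintype.card ι := by
  refine (finrank_iSup_le_sum _).trans ?_
  rw [mul_comm, ← smul_eq_mul]
  exact Finset.sum_le_card_nsmul _ _ _ fun i _ => finrank_tanCone_le (by norm_num) _ _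

theorem map_rename_tanSpan_le {f : Fin (k + 1) → Fin (n + 1)} (hf : Function.Injective f)
    (u v : ι → Fin (k + 1) → ℂ) :
    (tanSpan u v).map (rename f : MvPolynomial _ ℂ →ₐ[ℂ] _).toLinearMap ≤
      tanSpan (fun i => Function.ExtendByZero.linearMap ℂ f (u i))
        (fun i => Function.ExtendByZero.linearMap ℂ f (v i)) := by
  rw [tanSpan, Submodule.map_iSup]
  exact iSup_mono fun i => map_rename_tanCone_le hf _ _

theorem isPolynomialFamily_tanSpan_lineMap (u₀ u₁ v₀ v₁ : ι → Fin (n + 1) → ℂ) :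
    IsPolynomialFamily fun z : ℂ =>
      tanSpan (AffineMap.lineMap u₀ u₁ z) (AffineMap.lineMap v₀ v₁ z) := by
  refine IsPolynomialFamily.iSup fun i => ?_
  simpa only [AffineMap.pi_lineMap_apply] using
    isPolynomialFamily_tanCone_lineMap (d := 3) (u₀ i) (u₁ i) (v₀ i) (v₁ i)

theorem finrank_S3U_sup_tanSpan_le [Fintype ι] {i : Fin 3} (h : 24 * (i : ℕ) ≤ k + 1)
    {ℓ m : ι → Fin (k + 24 + 1) → ℂ} (hℓ : ∀ j, memU i (ℓ j)) (hm : ∀ j, memU i (m j)) :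
    Module.finrank ℂ ↥(S3U i ⊔ tanSpan ℓ m) ≤ (k + 3).choose 3 + 48 * Fintype.card ι := by
  have hle : S3U i ⊔ tanSpan ℓ m ≤ S3U i ⊔ ⨆ j, tanConeAlong (block i) 3 (ℓ j) (m j) :=
    sup_le le_sup_left (iSup_le fun j => (tanCone_le_S3U_sup (hℓ j) (hm j)).trans
      (sup_le_sup_left (le_iSup (fun j => tanConeAlong (block i) 3 (ℓ j) (m j)) j) _))
  have hblock (j : ι) : Module.finrank ℂ (tanConeAlong (block i) 3 (ℓ j) (m j)) ≤ 48 :=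
    (finrank_tanConeAlong_le _ _ _).trans (Nat.mul_le_mul_left 2 ncard_block_le)
  calc Module.finrank ℂ ↥(S3U i ⊔ tanSpan ℓ m)
      ≤ Module.finrank ℂ ↥(S3U i ⊔ ⨆ j, tanConeAlong (block i) 3 (ℓ j) (m j)) :=
        Submodule.finrank_mono hle
    _ ≤ Module.finrank ℂ (S3U i : Submodule ℂ (MvPolynomial (Fin (k + 24 + 1)) ℂ)) +
          Module.finrank ℂ ↥(⨆ j, tanConeAlong (block i) 3 (ℓ j) (m j)) :=
        Submodule.finrank_add_le_finrank_add_finrank _ _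
    _ ≤ (k + 3).choose 3 + 48 * Fintype.card ι := by
        refine add_le_add (finrank_S3U_le h) ((finrank_iSup_le_sum _).trans ?_)
        rw [mul_comm, ← smul_eq_mul]
        exact Finset.sum_le_card_nsmul _ _ _ fun j _ => hblock j

end TanSpan

section Wspace

variable {k n : ℕ} {α β ι : Type*}

/-- The space `W(n, s; a, 0, 0)` with tangent cones at the points `[u_i² u'_i]`, lying on `U_1`,
and `[ℓ_i² m_i]`. -/
noncomputable def WspaceSingle (u u' : α → Fin (n + 1) → ℂ) (ℓ m : ι → Fin (n + 1) → ℂ) :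
    Submodule ℂ (MvPolynomial (Fin (n + 1)) ℂ) :=
  S3U 0 ⊔ tanSpan u u' ⊔ tanSpan ℓ m

/-- The space `W(n, s; a, b, 0)` with tangent cones at the points `[u_i² u'_i]`, lying on `U_1`,
`[p_i² q_i]`, lying on `U_2`, and `[ℓ_i² m_i]`. -/
noncomputable def WspacePair (u u' : α → Fin (n + 1) → ℂ) (p q : β → Fin (n + 1) → ℂ)
    (ℓ m : ι → Fin (n + 1) → ℂ) : Submodule ℂ (MvPolynomial (Fin (n + 1)) ℂ) :=
  S3U 0 ⊔ tanSpan u u' ⊔ (S3U 1 ⊔ tanSpan p q) ⊔ tanSpan ℓ m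

instance [Finite α] [Finite ι] (u u' : α → Fin (n + 1) → ℂ) (ℓ m : ι → Fin (n + 1) → ℂ) :
    FiniteDimensional ℂ (WspaceSingle u u' ℓ m) := by
  unfold WspaceSingle
  infer_instance

instance [Finite α] [Finite β] [Finite ι] (u u' : α → Fin (n + 1) → ℂ)
    (p q : β → Fin (n + 1) → ℂ) (ℓ m : ι → Fin (n + 1) → ℂ) :
    FiniteDimensional ℂ (WspacePair u u' p q ℓ m) := by
  unfold WspacePair
  infer_instance

theorem WspaceSingle_le (u u' : α → Fin (n + 1) → ℂ) (ℓ m : ι → Fin (n + 1) → ℂ) :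
    WspaceSingle u u' ℓ m ≤ linearForms ℂ Set.univ ^ 3 :=
  sup_le (sup_le S3U_le (tanSpan_le _ _)) (tanSpan_le _ _)

theorem finrank_WspaceSingle_le_choose (u u' : α → Fin (n + 1) → ℂ)
    (ℓ m : ι → Fin (n + 1) → ℂ) :
    Module.finrank ℂ (WspaceSingle u u' ℓ m) ≤ (n + 3).choose 3 := by
  refine (Submodule.finrank_mono (WspaceSingle_le u u' ℓ m)).trans
    ((finrank_linearForms_pow_le _ 3).trans_eq ?_)
  simp [Set.ncard_univ]

theorem finrank_WspaceSingle_le [Fintype α] [Fintype ι] {u u' : α → Fin (k + 24 + 1) → ℂ}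
    (hu : ∀ j, memU 0 (u j)) (hu' : ∀ j, memU 0 (u' j)) (ℓ m : ι → Fin (k + 24 + 1) → ℂ) :
    Module.finrank ℂ (WspaceSingle u u' ℓ m) ≤
      (k + 3).choose 3 + 48 * Fintype.card α + (2 * (k + 24) + 1) * Fintype.card ι :=
  (Submodule.finrank_add_le_finrank_add_finrank _ _).trans
    (add_le_add (finrank_S3U_sup_tanSpan_le (Nat.zero_le _) hu hu') (finrank_tanSpan_le ℓ m))

theorem isPolynomialFamily_WspaceSingle_lineMap (u u' : α → Fin (n + 1) → ℂ)
    (ℓ₀ ℓ₁ m₀ m₁ : ι → Fin (n + 1) → ℂ) :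
    IsPolynomialFamily fun z : ℂ =>
      WspaceSingle u u' (AffineMap.lineMap ℓ₀ ℓ₁ z) (AffineMap.lineMap m₀ m₁ z) :=
  (IsPolynomialFamily.const _).sup (isPolynomialFamily_tanSpan_lineMap _ _ _ _)

theorem isPolynomialFamily_WspacePair_lineMap (u u' : α → Fin (n + 1) → ℂ)
    (p₀ p₁ q₀ q₁ : β → Fin (n + 1) → ℂ) (ℓ m : ι → Fin (n + 1) → ℂ) :
    IsPolynomialFamily fun z : ℂ =>
      WspacePair u u' (AffineMap.lineMap p₀ p₁ z) (AffineMap.lineMap q₀ q₁ z) ℓ m :=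
  ((IsPolynomialFamily.const _).sup ((IsPolynomialFamily.const _).sup
    (isPolynomialFamily_tanSpan_lineMap _ _ _ _))).sup (.const _)

theorem WspacePair_le_WspaceSingle_sup_S3U {c b s t : ℕ} (u u' : Fin c → Fin (n + 1) → ℂ)
    (v v' : Fin b → Fin (n + 1) → ℂ) (p q : Fin t → Fin (n + 1) → ℂ)
    (ℓ m : Fin s → Fin (n + 1) → ℂ) :
    WspacePair u u' p q ℓ m ≤
      WspaceSingle (Fin.append u v) (Fin.append u' v') (Fin.append ℓ p) (Fin.append m q) ⊔
        S3U 1 := by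
  rw [WspacePair, WspaceSingle, tanSpan_append, tanSpan_append]
  order

theorem map_rename_WspaceSingle_le_inf (hk : 23 ≤ k) {c b s t : ℕ}
    (u u' : Fin c → Fin (k + 24 + 1) → ℂ) (v v' : Fin b → Fin (k + 1) → ℂ)
    (x y : Fin t → Fin (k + 1) → ℂ) (ℓ m : Fin s → Fin (k + 24 + 1) → ℂ) :
    (WspaceSingle v v' x y).map (rename (skipBlock 1) : MvPolynomial _ ℂ →ₐ[ℂ] _).toLinearMap ≤
      WspaceSingle (Fin.append u (extendBlock 1 ∘ v)) (Fin.append u' (extendBlock 1 ∘ v'))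
        (Fin.append ℓ (extendBlock 1 ∘ x)) (Fin.append m (extendBlock 1 ∘ y)) ⊓ S3U 1 := by
  refine le_inf ?_ ?_
  · have hS3U := map_rename_skipBlock_S3U_le (k := k) (i := 1) (i' := 0) (by decide)
    have hv := map_rename_tanSpan_le (skipBlock_injective (i := 1)) v v'
    have hx := map_rename_tanSpan_le (skipBlock_injective (i := 1)) x y
    rw [WspaceSingle, WspaceSingle, Submodule.map_sup, Submodule.map_sup, tanSpan_append,
      tanSpan_append]
    exact sup_le_sup (sup_le_sup hS3U (hv.trans le_sup_right)) (hx.trans le_sup_right)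
  · rw [S3U_eq_map_rename (show 24 * ((1 : Fin 3) : ℕ) ≤ k + 1 by rw [Fin.val_one]; omega)]
    exact Submodule.map_mono (WspaceSingle_le _ _ _ _)

theorem finrank_WspacePair_add_finrank_WspaceSingle_le (hk : 23 ≤ k) {c b s t : ℕ}
    (u u' : Fin c → Fin (k + 24 + 1) → ℂ) (v v' : Fin b → Fin (k + 1) → ℂ)
    (x y : Fin t → Fin (k + 1) → ℂ) (ℓ m : Fin s → Fin (k + 24 + 1) → ℂ) :
    Module.finrank ℂ (WspacePair u u' (extendBlock 1 ∘ x) (extendBlock 1 ∘ y) ℓ m) +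
        Module.finrank ℂ (WspaceSingle v v' x y) ≤
      Module.finrank ℂ (WspaceSingle
        (Fin.append u (extendBlock 1 ∘ v)) (Fin.append u' (extendBlock 1 ∘ v'))
        (Fin.append ℓ (extendBlock 1 ∘ x)) (Fin.append m (extendBlock 1 ∘ y))) +
      (k + 3).choose 3 := by
  set W := WspaceSingle (Fin.append u (extendBlock 1 ∘ v)) (Fin.append u' (extendBlock 1 ∘ v'))
    (Fin.append ℓ (extendBlock 1 ∘ x)) (Fin.append m (extendBlock 1 ∘ y))
  have finrank_pair := Submodule.finrank_mono (WspacePair_le_WspaceSingle_sup_S3U u u'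
    (extendBlock 1 ∘ v) (extendBlock 1 ∘ v') (extendBlock 1 ∘ x) (extendBlock 1 ∘ y) ℓ m)
  have finrank_map := Submodule.finrank_mono (map_rename_WspaceSingle_le_inf hk u u' v v' x y ℓ m)
  have finrank_map_eq : Module.finrank ℂ ((WspaceSingle v v' x y).map
        (rename (skipBlock 1) : MvPolynomial _ ℂ →ₐ[ℂ] _).toLinearMap) =
      Module.finrank ℂ (WspaceSingle v v' x y) :=
    (Submodule.equivMapOfInjective _ (rename_injective _ skipBlock_injective) _).finrank_eq.symm
  calc _ ≤ Module.finrank ℂ ↥(W ⊔ S3U 1) + Module.finrank ℂ ↥(W ⊓ S3U 1) :=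
        add_le_add finrank_pair (finrank_map_eq ▸ finrank_map)
    _ = Module.finrank ℂ W + Module.finrank ℂ (S3U 1 : Submodule ℂ (MvPolynomial _ ℂ)) :=
        Submodule.finrank_sup_add_finrank_inf_eq _ _
    _ ≤ Module.finrank ℂ W + (k + 3).choose 3 :=
        Nat.add_le_add_left (finrank_S3U_le (by rw [Fin.val_one]; omega)) _

/-- The points `x` and `y` are found on the lines joining `p` to `x₁` and `q` to `y₁`, along which
both dimensions are lower semicontinuous. -/
theorem exists_finrank_WspacePair_add_finrank_WspaceSingle_le (hk : 23 ≤ k) {c b s t : ℕ}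
    (u u' : Fin c → Fin (k + 24 + 1) → ℂ) {p q : Fin t → Fin (k + 24 + 1) → ℂ}
    (hp : ∀ j, memU 1 (p j)) (hq : ∀ j, memU 1 (q j)) (ℓ m : Fin s → Fin (k + 24 + 1) → ℂ)
    (v v' : Fin b → Fin (k + 1) → ℂ) (x₁ y₁ : Fin t → Fin (k + 1) → ℂ) :
    ∃ x y : Fin t → Fin (k + 1) → ℂ,
      Module.finrank ℂ (WspacePair u u' p q ℓ m) + Module.finrank ℂ (WspaceSingle v v' x₁ y₁) ≤
        Module.finrank ℂ (WspaceSingle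
          (Fin.append u (extendBlock 1 ∘ v)) (Fin.append u' (extendBlock 1 ∘ v'))
          (Fin.append ℓ (extendBlock 1 ∘ x)) (Fin.append m (extendBlock 1 ∘ y))) +
        (k + 3).choose 3 := by
  have hblock : 24 * ((1 : Fin 3) : ℕ) ≤ k + 1 := by
    simp only [Fin.val_one]
    omega
  obtain ⟨x₀, rfl⟩ := exists_eq_extendBlock_comp hblock hp
  obtain ⟨y₀, rfl⟩ := exists_eq_extendBlock_comp hblock hq
  obtain ⟨z, hz_pair, hz_single⟩ :=
    (isPolynomialFamily_WspacePair_lineMap u u' (extendBlock 1 ∘ x₀) (extendBlock 1 ∘ x₁)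
      (extendBlock 1 ∘ y₀) (extendBlock 1 ∘ y₁) ℓ m).exists_finrank_le_and_finrank_le
    (isPolynomialFamily_WspaceSingle_lineMap v v' x₀ x₁ y₀ y₁) 0 1
  rw [AffineMap.lineMap_apply_zero, AffineMap.lineMap_apply_zero, ← extendBlock_comp_lineMap,
    ← extendBlock_comp_lineMap] at hz_pair
  rw [AffineMap.lineMap_apply_one, AffineMap.lineMap_apply_one] at hz_single
  exact ⟨AffineMap.lineMap x₀ x₁ z, AffineMap.lineMap y₀ y₁ z, (add_le_add hz_pair hz_single).trans
    (finrank_WspacePair_add_finrank_WspaceSingle_le hk u u' v v' _ _ ℓ m)⟩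

end Wspace

section ExpectedDimension

theorem expdimZ_single {n s a : ℕ} (ha : a ≠ 0) :
    expdimZ n s ![a, 0, 0] =
      min (((n + 3 - 24).choose 3 : ℤ) + 48 * a + (2 * n + 1) * s) ((n + 3).choose 3) := by
  have hcount : kcount ![a, 0, 0] = 1 := by
    simp [kcount, Finset.filter, Fin.univ_succ, ha]
  rw [expdimZ, hcount]
  simp [altsum]

theorem expdimZ_pair {n s a b : ℕ} (ha : a ≠ 0) (hb : b ≠ 0) :
    expdimZ n s ![a, b, 0] =
      min (2 * ((n + 3 - 24).choose 3 : ℤ) - (n + 3 - 48).choose 3 + 48 * (a + b) +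
        (2 * n + 1) * s) ((n + 3).choose 3) := by
  have hcount : kcount ![a, b, 0] = 2 := by
    simp [kcount, Finset.filter, Fin.univ_succ, ha, hb]
  rw [expdimZ, hcount]
  simp [altsum, Finset.sum_Icc_succ_top, sub_eq_add_neg]

theorem finrank_WspaceSingle_le_expdimZ {k s a : ℕ} (ha : a ≠ 0)
    {u u' : Fin a → Fin (k + 24 + 1) → ℂ} (hu : ∀ j, memU 0 (u j) ∧ memU 0 (u' j))
    (ℓ m : Fin s → Fin (k + 24 + 1) → ℂ) :
    (Module.finrank ℂ (WspaceSingle u u' ℓ m) : ℤ) ≤ expdimZ (k + 24) s ![a, 0, 0] := by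
  have hle := finrank_WspaceSingle_le (fun j => (hu j).1) (fun j => (hu j).2) ℓ m
  rw [Fintype.card_fin, Fintype.card_fin] at hle
  rw [expdimZ_single ha, show k + 24 + 3 - 24 = k + 3 by omega]
  exact le_min (mod_cast hle) (mod_cast finrank_WspaceSingle_le_choose u u' ℓ m)

/-- The conditions defining `W(n, s; a, b, 0)` exactly fill the space of cubics, that is, both
arguments of the minimum defining its expected dimension agree. -/
def IsPerfectPair (n s a b : ℕ) : Prop :=
  2 * ((n + 3 - 24).choose 3 : ℤ) - (n + 3 - 48).choose 3 + 48 * (a + b) + (2 * n + 1) * s =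
    (n + 3).choose 3

theorem expdimZ_single_add_choose_le {k s t c b : ℕ} (hc : c ≠ 0) (ht : t ≠ 0) (hb : b ≠ 0)
    (hperfect : IsPerfectPair (k + 24) s c t) :
    expdimZ (k + 24) (s + t) ![c + b, 0, 0] + (k + 3).choose 3 ≤
      expdimZ (k + 24) s ![c, t, 0] + expdimZ k t ![b, 0, 0] := by
  rw [expdimZ_single (by omega), expdimZ_pair hc ht, hperfect, min_self, expdimZ_single hb]
  rw [IsPerfectPair] at hperfect
  rw [show k + 24 + 3 - 24 = k + 3 by omega, show k + 24 + 3 - 48 = k + 3 - 24 by omega]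
    at hperfect
  rw [show k + 24 + 3 - 24 = k + 3 by omega, ← min_add_add_left]
  push_cast at hperfect ⊢
  refine le_min ?_ (add_le_add_left (min_le_right _ _) _)
  linarith [min_le_left (((k + 3).choose 3 : ℤ) + 48 * (c + b) + (2 * (k + 24) + 1) * (s + t))
    ((k + 24 + 3).choose 3)]

end ExpectedDimension

section TStmt

variable {n s : ℕ}

theorem Wspace_eq_WspaceSingle {a : ℕ} (ha : a ≠ 0) (ℓ m : Fin s → Fin (n + 1) → ℂ)
    (u u' : (i : Fin 3) → Fin (![a, 0, 0] i) → Fin (n + 1) → ℂ) :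
    Wspace ℓ m u u' = WspaceSingle (u 0) (u' 0) ℓ m := by
  refine congrArg (· ⊔ tanSpan ℓ m) (le_antisymm (iSup_le ?_) (le_iSup_of_le ⟨0, ha⟩ le_rfl))
  rintro ⟨i, hi⟩
  fin_cases i
  · exact le_rfl
  · exact absurd rfl hi
  · exact absurd rfl hi

theorem Wspace_eq_WspacePair {a b : ℕ} (ha : a ≠ 0) (hb : b ≠ 0) (ℓ m : Fin s → Fin (n + 1) → ℂ)
    (u u' : (i : Fin 3) → Fin (![a, b, 0] i) → Fin (n + 1) → ℂ) :
    Wspace ℓ m u u' = WspacePair (u 0) (u' 0) (u 1) (u' 1) ℓ m := by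
  refine congrArg (· ⊔ tanSpan ℓ m) (le_antisymm (iSup_le ?_)
    (sup_le (le_iSup_of_le ⟨0, ha⟩ le_rfl) (le_iSup_of_le ⟨1, hb⟩ le_rfl)))
  rintro ⟨i, hi⟩
  fin_cases i
  · exact le_sup_left
  · exact le_sup_right
  · exact absurd rfl hi

theorem tStmt_single_iff {a : ℕ} (ha : a ≠ 0) :
    TStmt n s ![a, 0, 0] ↔ ∃ (u u' : Fin a → Fin (n + 1) → ℂ) (ℓ m : Fin s → Fin (n + 1) → ℂ),
      (∀ j, memU 0 (u j) ∧ memU 0 (u' j)) ∧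
      (Module.finrank ℂ (WspaceSingle u u' ℓ m) : ℤ) = expdimZ n s ![a, 0, 0] := by
  constructor
  · rintro ⟨ℓ, m, u, u', hu, hfinrank⟩
    exact ⟨u 0, u' 0, ℓ, m, hu 0, Wspace_eq_WspaceSingle ha ℓ m u u' ▸ hfinrank⟩
  · rintro ⟨u, u', ℓ, m, hu, hfinrank⟩
    let extendFamily (w : Fin a → Fin (n + 1) → ℂ) (i : Fin 3) :
        Fin (![a, 0, 0] i) → Fin (n + 1) → ℂ :=
      Fin.cases (motive := fun i => Fin (![a, 0, 0] i) → Fin (n + 1) → ℂ) w (fun _ _ => 0) i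
    refine ⟨ℓ, m, extendFamily u, extendFamily u', fun i => ?_, ?_⟩
    · induction i using Fin.cases with
      | zero => exact hu
      | succ i => exact fun _ => ⟨fun _ _ _ => rfl, fun _ _ _ => rfl⟩
    · rw [Wspace_eq_WspaceSingle ha]
      exact hfinrank

theorem TStmt.exists_pair {a b : ℕ} (ha : a ≠ 0) (hb : b ≠ 0) (h : TStmt n s ![a, b, 0]) :
    ∃ (u u' : Fin a → Fin (n + 1) → ℂ) (p q : Fin b → Fin (n + 1) → ℂ)
      (ℓ m : Fin s → Fin (n + 1) → ℂ),
      (∀ j, memU 0 (u j) ∧ memU 0 (u' j)) ∧ (∀ j, memU 1 (p j) ∧ memU 1 (q j)) ∧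
      (Module.finrank ℂ (WspacePair u u' p q ℓ m) : ℤ) = expdimZ n s ![a, b, 0] := by
  obtain ⟨ℓ, m, u, u', hu, hfinrank⟩ := h
  exact ⟨u 0, u' 0, u 1, u' 1, ℓ, m, hu 0, hu 1, Wspace_eq_WspacePair ha hb ℓ m u u' ▸ hfinrank⟩

/-- The specialization step: `t` of the `s + t` general points and `b` of the `c + b` points of
`U_1` are specialized to `U_2`. -/
theorem TStmt.specialize {k s t c b : ℕ} (hk : 23 ≤ k) (hc : c ≠ 0) (ht : t ≠ 0) (hb : b ≠ 0)
    (hperfect : IsPerfectPair (k + 24) s c t)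
    (hpair : TStmt (k + 24) s ![c, t, 0]) (hsingle : TStmt k t ![b, 0, 0]) :
    TStmt (k + 24) (s + t) ![c + b, 0, 0] := by
  have hcb : c + b ≠ 0 := by omega
  obtain ⟨u, u', p, q, ℓ, m, hu, hpq, finrank_pair⟩ := hpair.exists_pair hc ht
  obtain ⟨v, v', x₁, y₁, hv, finrank_single⟩ := (tStmt_single_iff hb).1 hsingle
  obtain ⟨x, y, hglue⟩ := exists_finrank_WspacePair_add_finrank_WspaceSingle_le hk u u'
    (fun j => (hpq j).1) (fun j => (hpq j).2) ℓ m v v' x₁ y₁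
  have hmem : ∀ j, memU 0 (Fin.append u (extendBlock 1 ∘ v) j) ∧
      memU 0 (Fin.append u' (extendBlock 1 ∘ v') j) := by
    refine Fin.addCases (fun j => ?_) fun j => ?_
    · simpa only [Fin.append_left] using hu j
    · simp only [Fin.append_right]
      exact ⟨(hv j).1.extendBlock_of_lt (by decide), (hv j).2.extendBlock_of_lt (by decide)⟩
  refine (tStmt_single_iff hcb).2 ⟨_, _, Fin.append ℓ (extendBlock 1 ∘ x),
    Fin.append m (extendBlock 1 ∘ y), hmem,
    le_antisymm (finrank_WspaceSingle_le_expdimZ hcb hmem _ _) ?_⟩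
  have lower := expdimZ_single_add_choose_le hc ht hb hperfect
  zify at hglue
  linarith

end TStmt

section Numerics

theorem six_mul_cast_choose_three (n : ℕ) :
    6 * (n.choose 3 : ℤ) = n * (n - 1) * (n - 2) := by
  have h : ((n.descFactorial 3 : ℕ) : ℤ) = n * (n - 1) * (n - 2) := by
    rw [← descPochhammer_eval_eq_descFactorial]
    simp [descPochhammer_succ_right]
  rw [← h, Nat.descFactorial_eq_factorial_mul_choose]
  simp [Nat.factorial]

theorem isPerfectPair_tfun {n : ℕ} (hn : 45 ≤ n) :
    IsPerfectPair n 96 (tfun (n - 24)) (tfun (n - 24)) := by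
  obtain ⟨j, rfl⟩ := Nat.exists_eq_add_of_le' hn
  have ht : (tfun (j + 45 - 24) : ℤ) = 4 * (j + 45 - 24) - 37 := by
    unfold tfun
    omega
  have h₁ := six_mul_cast_choose_three (j + 45 + 3 - 24)
  have h₂ := six_mul_cast_choose_three (j + 45 + 3 - 48)
  have h₃ := six_mul_cast_choose_three (j + 45 + 3)
  rw [IsPerfectPair, ht]
  push_cast [show j + 45 + 3 - 24 = j + 24 by omega, show j + 45 + 3 - 48 = j by omega]
    at h₁ h₂ h₃ ⊢
  linarith

theorem tfun_add_twentyFour {n : ℕ} (hn : 10 ≤ n) : tfun (n + 24) = 96 + tfun n := by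
  unfold tfun
  omega

theorem s1_add_twentyFour (n : ℕ) : s1 (n + 24) = tfun (n + 24) + s1 n := by
  have hdiv : (n + 24) / 24 = n / 24 + 1 := by omega
  have hmod : (n + 24) % 24 = n % 24 := by omega
  have htfun : tfun (n + 24) = 96 * (n / 24) + 59 + 4 * (n % 24) := by
    unfold tfun
    omega
  rw [htfun, s1, s1, hdiv, hmod]
  ring

theorem s1_pos {n : ℕ} (hn : 0 < n) : 0 < s1 n := by
  unfold s1
  by_cases hdiv : n / 24 = 0
  · have hmod : 1 ≤ n % 24 := by omega
    have : 1 ≤ (4 * (n % 24) ^ 2 + 22 * (n % 24) + 33) / 48 := by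
      rw [Nat.le_div_iff_mul_le (by norm_num)]
      nlinarith
    omega
  · positivity

end Numerics

theorem induction_step_ii_general {n b : ℕ} (hn : 47 ≤ n) (hb : b ≠ 0)
    (h1 : TStmt n 96 ![tfun (n - 24), tfun (n - 24), 0])
    (h2 : TStmt (n - 24) (tfun (n - 24)) ![b, 0, 0]) :
    TStmt n (tfun n) ![tfun (n - 24) + b, 0, 0] := by
  obtain ⟨k, rfl⟩ := Nat.exists_eq_add_of_le' (show 24 ≤ n by omega)
  have perfect := isPerfectPair_tfun (n := k + 24) (by omega)
  rw [Nat.add_sub_cancel] at h1 h2 perfect ⊢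
  rw [tfun_add_twentyFour (by omega)]
  have ht : tfun k ≠ 0 := by
    unfold tfun
    omega
  exact TStmt.specialize (by omega) ht ht hb perfect h1 h2

/-- Proposition 3.7 (ii): for `n ≥ 56`, truth of `T(n, 96; t(n−24), t(n−24), 0)` and of
`T(n−24, t(n−24); s_i(n−48), 0, 0)` implies truth of `T(n, t(n); s_i(n−24), 0, 0)`. -/
theorem induction_step_ii (si : ℕ → ℕ) (hsi : si = s1 ∨ si = s2) (n : ℕ) (hn : 56 ≤ n)
    (h1 : TStmt n 96 ![tfun (n - 24), tfun (n - 24), 0])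
    (h2 : TStmt (n - 24) (tfun (n - 24)) ![si (n - 48), 0, 0]) :
    TStmt n (tfun n) ![si (n - 24), 0, 0] := by
  have hk : n - 24 = n - 48 + 24 := by omega
  have step : si (n - 24) = tfun (n - 24) + si (n - 48) := by
    rcases hsi with rfl | rfl
    · exact hk ▸ s1_add_twentyFour _
    · exact hk ▸ congrArg (· + 1) (s1_add_twentyFour _)
  have hpos : si (n - 48) ≠ 0 := by
    rcases hsi with rfl | rfl
    · exact (s1_pos (by omega)).ne'
    · exact Nat.succ_ne_zero _
  exact step ▸ induction_step_ii_general (by omega) hpos h1 h2
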